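/- arXiv:2102.12035 — 3 statements merged into one kernel-verified Lean document; each statement's English description precedes it below -/
import Mathlib

section
/- Converse core of Proposition 1. Let 𝒰₁,𝒰₂ be finite sets and let p be a joint pmf on {0,1}²×{0,1}²×𝒰₁×𝒰₂×({0,1}×{0,1}) of the form p(x₁,x₂,u₁,u₂,y) = p(x₁) p(x₂) p(u₁|x₁) p(u₂|x₂) p(y|u₁,u₂), whose (X₁,X₂)-marginal is that of four i.i.d. uniform bits and whose (X₁,X₂,Y)-marginal equals the Example distribution q_{X₁X₂Y}. Then I(U₁;X₁) ≥ 1, I(U₂;X₂) ≥ 1, and I(U₁;X₁) + I(U₂;X₂) ≥ 3. -/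
/-!
Since `X₁` is uniform on four points, `I(U₁;X₁) = 2 - H(X₁|U₁)`, so the claim is `H(X₁|U₁) ≤ 1`,
`H(X₂|U₂) ≤ 1` and `H(X₁|U₁) + H(X₂|U₂) ≤ 1`.

If `x₁`, `x₂` are possible given `u₁`, `u₂` and `y` is possible given `(u₁, u₂)`, then
`y = (x₁ⱼ, x₂ⱼ)` for some `j`. For `x₂ = 01` the second bit of `y` reveals `j`, so all the `x₁`
possible given `u₁` agree in the `j`-th bit. Hence at most two of them exist, and `H(X₁|U₁)` is at
most the probability that there are exactly two; call `u₁` ambiguous of type `j` in that case.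

The other bit being undetermined, a `u₁` of type `j` forces `J = j`. Given `x₂ = 01` this event has
probability `1/2`, so each type has probability at most `1/2`. Moreover, ambiguous `u₁` and `u₂`
have the same type. Hence either only one of the users has ambiguous symbols, of total probability
at most `1`, or all the ambiguous symbols of both users have one and the same type, and those of
each user have probability at most `1/2`.
-/

open Finset

/-- A probability mass function on a finite type. -/
def IsPMF {α : Type*} [Fintype α] (p : α → ℝ) : Prop :=
  (∀ a, 0 ≤ p a) ∧ ∑ a, p a = 1

/-- Marginal (pushforward) of a pmf `p` on `Ω` under the map `f`. -/
noncomputable def marg {Ω β : Type*} [Fintype Ω] [DecidableEq β]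
    (p : Ω → ℝ) (f : Ω → β) (b : β) : ℝ :=
  ∑ ω : Ω, if f ω = b then p ω else 0

/-- Shannon entropy (in bits) of a pmf given as a function. -/
noncomputable def entPMF {β : Type*} [Fintype β] (r : β → ℝ) : ℝ :=
  -∑ b : β, r b * Real.logb 2 (r b)

/-- Entropy (in bits) of the random variable `f` under the joint pmf `p`. -/
noncomputable def ent {Ω β : Type*} [Fintype Ω] [Fintype β] [DecidableEq β]
    (p : Ω → ℝ) (f : Ω → β) : ℝ :=
  entPMF (fun b => marg p f b)

/-- Conditional entropy `H(f | g)`. -/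
noncomputable def condEnt {Ω β γ : Type*} [Fintype Ω] [Fintype β] [Fintype γ]
    [DecidableEq β] [DecidableEq γ] (p : Ω → ℝ) (f : Ω → β) (g : Ω → γ) : ℝ :=
  ent p (fun ω => (f ω, g ω)) - ent p g

/-- Mutual information `I(f ; g)`. -/
noncomputable def mi {Ω β γ : Type*} [Fintype Ω] [Fintype β] [Fintype γ]
    [DecidableEq β] [DecidableEq γ] (p : Ω → ℝ) (f : Ω → β) (g : Ω → γ) : ℝ :=
  ent p f + ent p g - ent p (fun ω => (f ω, g ω))

/-- Conditional mutual information `I(f ; g | h)`. -/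
noncomputable def cmi {Ω β γ δ : Type*} [Fintype Ω] [Fintype β] [Fintype γ] [Fintype δ]
    [DecidableEq β] [DecidableEq γ] [DecidableEq δ]
    (p : Ω → ℝ) (f : Ω → β) (g : Ω → γ) (h : Ω → δ) : ℝ :=
  ent p (fun ω => (f ω, h ω)) + ent p (fun ω => (g ω, h ω))
    - ent p (fun ω => (f ω, g ω, h ω)) - ent p h

/-- `bsel x j` is the `j`-th bit of the two-bit string `x`. -/
def bsel (x : Bool × Bool) (j : Fin 2) : Bool := if j = 0 then x.1 else x.2

/-- The Example distribution: `X₁ = (X₁₁, X₁₂)` and `X₂ = (X₂₁, X₂₂)` are four i.i.d.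
uniform bits, `J` is uniform on `{1,2}` independent of `(X₁, X₂)`, and
`Y = (X₁J, X₂J)`; `qEx` is the induced joint pmf of `(X₁, X₂, Y)`. -/
noncomputable def qEx : (Bool × Bool) × (Bool × Bool) × (Bool × Bool) → ℝ :=
  fun a => ∑ j : Fin 2,
    (1 / 32 : ℝ) * (if a.2.2 = (bsel a.1 j, bsel a.2.1 j) then 1 else 0)

section Entropy

open Real (log logb negMulLog)

lemma sum_negMulLog_le_add_mul_log_card {ι : Type*} (s : Finset ι) {a : ι → ℝ}
    (ha : ∀ i ∈ s, 0 ≤ a i) :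
    ∑ i ∈ s, negMulLog (a i) ≤ negMulLog (∑ i ∈ s, a i) + (∑ i ∈ s, a i) * log #s := by
  rcases s.eq_empty_or_nonempty with rfl | hs
  · simp
  have hn : (0 : ℝ) < #s := by exact_mod_cast hs.card_pos
  have jensen := Real.concaveOn_negMulLog.le_map_sum (t := s) (w := fun _ => (#s : ℝ)⁻¹) (p := a)
    (fun _ _ => by positivity) (by simp [hn.ne']) ha
  simp only [smul_eq_mul, ← mul_sum] at jensen
  calc ∑ i ∈ s, negMulLog (a i) = #s * ((#s : ℝ)⁻¹ * ∑ i ∈ s, negMulLog (a i)) := by field_simp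
    _ ≤ #s * negMulLog ((#s : ℝ)⁻¹ * ∑ i ∈ s, a i) := by gcongr
    _ = negMulLog (∑ i ∈ s, a i) + (∑ i ∈ s, a i) * log #s := by
        rw [Real.negMulLog_mul, negMulLog, Real.log_inv]
        field_simp
        ring

lemma entPMF_eq_sum_negMulLog_div {β : Type*} [Fintype β] (r : β → ℝ) :
    entPMF r = (∑ b, negMulLog (r b)) / log 2 := by
  simp only [entPMF, logb, negMulLog, sum_div, ← sum_neg_distrib]
  exact sum_congr rfl fun b _ => by ring

lemma marg_nonneg {Ω β : Type*} [Fintype Ω] [DecidableEq β] {p : Ω → ℝ} (hp : ∀ ω, 0 ≤ p ω)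
    (f : Ω → β) (b : β) : 0 ≤ marg p f b :=
  sum_nonneg fun ω _ => by split_ifs <;> simp [hp]

lemma marg_prodMk_comm {Ω β γ : Type*} [Fintype Ω] [DecidableEq β] [DecidableEq γ] (p : Ω → ℝ)
    (f : Ω → β) (g : Ω → γ) (b : β) (c : γ) :
    marg p (fun ω => (f ω, g ω)) (b, c) = marg p (fun ω => (g ω, f ω)) (c, b) := by
  simp only [marg, Prod.mk.injEq, and_comm]

lemma sum_marg_prodMk {Ω β γ : Type*} [Fintype Ω] [Fintype β] [DecidableEq β] [DecidableEq γ]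
    (p : Ω → ℝ) (f : Ω → β) (g : Ω → γ) (c : γ) :
    ∑ b, marg p (fun ω => (f ω, g ω)) (b, c) = marg p g c := by
  simp only [marg, Prod.mk.injEq, ite_and]
  rw [sum_comm]
  simp

variable {Ω β γ : Type*} [Fintype Ω] [Fintype β] [DecidableEq β]

lemma ent_eq_logb_card {p : Ω → ℝ} {f : Ω → β}
    (hf : ∀ b, marg p f b = (Fintype.card β : ℝ)⁻¹) : ent p f = logb 2 (Fintype.card β) := by
  cases isEmpty_or_nonempty β <;> simp [ent, entPMF, hf, Real.logb_inv]

variable [Fintype γ] [DecidableEq γ]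

lemma ent_prodMk_comm (p : Ω → ℝ) (f : Ω → β) (g : Ω → γ) :
    ent p (fun ω => (f ω, g ω)) = ent p (fun ω => (g ω, f ω)) := by
  simp only [ent, entPMF, Fintype.sum_prod_type, marg_prodMk_comm p f g]
  rw [sum_comm]

lemma mi_eq_ent_sub_condEnt (p : Ω → ℝ) (f : Ω → β) (g : Ω → γ) :
    mi p f g = ent p g - condEnt p g f := by
  rw [mi, condEnt, ent_prodMk_comm p f g]
  ring

lemma condEnt_le_sum_marg_mul_logb_card {p : Ω → ℝ} (hp : ∀ ω, 0 ≤ p ω) (f : Ω → β) (g : Ω → γ) :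
    condEnt p f g ≤
      ∑ c, marg p g c * logb 2 #{b | marg p (fun ω => (f ω, g ω)) (b, c) ≠ 0} := by
  have fiber_le (c : γ) : ∑ b, negMulLog (marg p (fun ω => (f ω, g ω)) (b, c)) ≤
      negMulLog (marg p g c)
        + marg p g c * log #{b | marg p (fun ω => (f ω, g ω)) (b, c) ≠ 0} := by
    have h := sum_negMulLog_le_add_mul_log_card {b | marg p (fun ω => (f ω, g ω)) (b, c) ≠ 0}
      (a := fun b => marg p (fun ω => (f ω, g ω)) (b, c)) fun b _ => marg_nonneg hp _ _
    rw [sum_filter_ne_zero, sum_marg_prodMk] at h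
    rwa [sum_filter_of_ne fun b _ => mt fun h0 => by rw [h0, Real.negMulLog_zero]] at h
  simp only [condEnt, ent, entPMF_eq_sum_negMulLog_div, logb, ← mul_div_assoc, ← sum_div,
    ← sub_div, Fintype.sum_prod_type_right]
  gcongr
  rw [sub_le_iff_le_add', ← sum_add_distrib]
  exact sum_le_sum fun c _ => fiber_le c

end Entropy

section FactorizedLaw

variable {α₁ α₂ β U V : Type*} [Fintype α₁] [Fintype α₂] [Fintype β] [Fintype U] [Fintype V]
  {p₁ : α₁ → ℝ} {p₂ : α₂ → ℝ} {enc₁ : α₁ → U → ℝ} {enc₂ : α₂ → V → ℝ} {dec : U → V → β → ℝ}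
  {p : α₁ × α₂ × U × V × β → ℝ}

lemma marg_user₁ [DecidableEq α₁] [DecidableEq U] (hp₂ : IsPMF p₂) (henc₂ : ∀ x, IsPMF (enc₂ x))
    (hdec : ∀ u v, IsPMF (dec u v))
    (hp : ∀ x₁ x₂ u v y,
      p (x₁, x₂, u, v, y) = p₁ x₁ * p₂ x₂ * enc₁ x₁ u * enc₂ x₂ v * dec u v y)
    (x : α₁) (u : U) : marg p (fun ω => (ω.1, ω.2.2.1)) (x, u) = p₁ x * enc₁ x u := by
  simp only [marg, Fintype.sum_prod_type, Prod.mk.injEq, hp, sum_ite_irrel, ← mul_sum,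
    (hdec _ _).2, (henc₂ _).2, mul_one, sum_const_zero, ite_and]
  simp [← sum_mul, ← mul_sum, hp₂.2]

lemma marg_user₂ [DecidableEq α₂] [DecidableEq V] (hp₁ : IsPMF p₁) (henc₁ : ∀ x, IsPMF (enc₁ x))
    (hdec : ∀ u v, IsPMF (dec u v))
    (hp : ∀ x₁ x₂ u v y,
      p (x₁, x₂, u, v, y) = p₁ x₁ * p₂ x₂ * enc₁ x₁ u * enc₂ x₂ v * dec u v y)
    (x : α₂) (v : V) : marg p (fun ω => (ω.2.1, ω.2.2.2.1)) (x, v) = p₂ x * enc₂ x v := by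
  simp only [marg, Fintype.sum_prod_type, Prod.mk.injEq, hp, sum_ite_irrel, ← mul_sum,
    (hdec _ _).2, mul_one, sum_const_zero, ite_and]
  simp [← sum_mul, ← mul_sum, hp₁.2, (henc₁ _).2]

end FactorizedLaw

lemma IsPMF.exists_ne_zero {α : Type*} [Fintype α] {r : α → ℝ} (hr : IsPMF r) : ∃ a, r a ≠ 0 := by
  have hsum : ∑ a, r a ≠ 0 := by simp [hr.2]
  exact (exists_ne_zero_of_sum_ne_zero hsum).imp fun _ h => h.2

section ExampleLaw

lemma bsel_false_true_bijective : Function.Bijective (bsel (false, true)) := by decide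

lemma exists_bsel_eq (j : Fin 2) (a b : Bool) : ∃ x, bsel x j = a ∧ ∀ i ≠ j, bsel x i = b := by
  revert j a b
  decide

lemma card_bsel_eq (j : Fin 2) (a : Bool) : #{x | bsel x j = a} = 2 := by
  revert j a
  decide

lemma qEx_swap (x₁ x₂ y : Bool × Bool) : qEx (x₁, x₂, y.swap) = qEx (x₂, x₁, y) := by
  obtain ⟨a, b⟩ := y
  simp [qEx, and_comm]

lemma exists_eq_bsel_of_qEx_ne_zero {x₁ x₂ y : Bool × Bool} (h : qEx (x₁, x₂, y) ≠ 0) :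
    ∃ j, y = (bsel x₁ j, bsel x₂ j) := by
  contrapose! h
  simp [qEx, h]

lemma sum_qEx_filter (x₁ x₂ : Bool × Bool) (P : Bool × Bool → Prop) [DecidablePred P] :
    ∑ y with P y, qEx (x₁, x₂, y) = (1 / 32 : ℝ) * #{j | P (bsel x₁ j, bsel x₂ j)} := by
  simp only [qEx, ← mul_sum, card_filter, Nat.cast_sum, Nat.cast_ite, Nat.cast_one, Nat.cast_zero]
  rw [sum_comm]
  simp

end ExampleLaw

/-- The encoders `enc₁`, `enc₂` and the decoder `dec` are stochastic kernels, and the law of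
`(X₁, X₂, Y)` they induce from independent uniform inputs is the Example distribution. -/
structure SimulatesExample {U V : Type*} [Fintype U] [Fintype V] (enc₁ : Bool × Bool → U → ℝ)
    (enc₂ : Bool × Bool → V → ℝ) (dec : U → V → Bool × Bool → ℝ) : Prop where
  isPMF_enc₁ : ∀ x, IsPMF (enc₁ x)
  isPMF_enc₂ : ∀ x, IsPMF (enc₂ x)
  isPMF_dec : ∀ u v, IsPMF (dec u v)
  law : ∀ x₁ x₂ y, ∑ u, ∑ v, (1 / 16 : ℝ) * enc₁ x₁ u * enc₂ x₂ v * dec u v y = qEx (x₁, x₂, y)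

/-- The probability of the encoder output `u`, for uniform input. -/
noncomputable def outputProb {U : Type*} (enc : Bool × Bool → U → ℝ) (u : U) : ℝ :=
  ∑ x, (1 / 4 : ℝ) * enc x u

/-- The encoder output `u` is ambiguous of type `j`: for some `a`, both inputs whose `j`-th bit
is `a` are possible given `u`. -/
def IsAmbiguous {U : Type*} (enc : Bool × Bool → U → ℝ) (j : Fin 2) (u : U) : Prop :=
  ∃ a, ∀ x, bsel x j = a → enc x u ≠ 0

open Classical in
/-- The probability that the encoder output is ambiguous of type `j`, for uniform input. -/
noncomputable def ambiguityProb {U : Type*} [Fintype U] (enc : Bool × Bool → U → ℝ) (j : Fin 2) :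
    ℝ :=
  ∑ u with IsAmbiguous enc j u, outputProb enc u

open Classical in
lemma logb_card_support_le {U : Type*} {enc : Bool × Bool → U → ℝ} {u : U} {j : Fin 2} {a : Bool}
    (h : ∀ x, enc x u ≠ 0 → bsel x j = a) :
    Real.logb 2 #{x | enc x u ≠ 0} ≤ if IsAmbiguous enc j u then 1 else 0 := by
  have hsub : ({x | enc x u ≠ 0} : Finset _) ⊆ ({x | bsel x j = a} : Finset _) :=
    monotone_filter_right _ fun x _ => h x
  split_ifs with hu
  · have hcard := card_le_card hsub
    rw [card_bsel_eq] at hcard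
    interval_cases #{x | enc x u ≠ 0} <;> simp
  · have hne : ({x | enc x u ≠ 0} : Finset _) ≠ ({x | bsel x j = a} : Finset _) := fun heq =>
      hu ⟨a, fun x => (filter_inj'.1 heq (mem_univ x)).2⟩
    have hcard := card_lt_card (hsub.ssubset_of_ne hne)
    rw [card_bsel_eq] at hcard
    interval_cases #{x | enc x u ≠ 0} <;> simp

namespace SimulatesExample

variable {U V : Type*} [Fintype U] [Fintype V] {enc₁ : Bool × Bool → U → ℝ}
  {enc₂ : Bool × Bool → V → ℝ} {dec : U → V → Bool × Bool → ℝ}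

lemma symm (h : SimulatesExample enc₁ enc₂ dec) :
    SimulatesExample enc₂ enc₁ (fun v u y => dec u v y.swap) where
  isPMF_enc₁ := h.isPMF_enc₂
  isPMF_enc₂ := h.isPMF_enc₁
  isPMF_dec v u := ⟨fun y => (h.isPMF_dec u v).1 y.swap,
    ((Equiv.prodComm Bool Bool).sum_comp (dec u v)).trans (h.isPMF_dec u v).2⟩
  law x₂ x₁ y := by
    rw [← qEx_swap, ← h.law, sum_comm]
    exact sum_congr rfl fun u _ => sum_congr rfl fun v _ => by ring

lemma outcome_nonneg (h : SimulatesExample enc₁ enc₂ dec) (x₁ x₂ : Bool × Bool) (u : U) (v : V)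
    (y : Bool × Bool) : 0 ≤ enc₁ x₁ u * enc₂ x₂ v * dec u v y :=
  mul_nonneg (mul_nonneg ((h.isPMF_enc₁ x₁).1 u) ((h.isPMF_enc₂ x₂).1 v))
    ((h.isPMF_dec u v).1 y)

lemma sum_outcome_eq_qEx (h : SimulatesExample enc₁ enc₂ dec) (x₁ x₂ y : Bool × Bool) :
    ∑ u, ∑ v, enc₁ x₁ u * enc₂ x₂ v * dec u v y = 16 * qEx (x₁, x₂, y) := by
  simp only [← h.law, mul_assoc, ← mul_sum]
  ring

lemma exists_eq_bsel (h : SimulatesExample enc₁ enc₂ dec) {x₁ x₂ y : Bool × Bool} {u : U} {v : V}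
    (hu : enc₁ x₁ u ≠ 0) (hv : enc₂ x₂ v ≠ 0) (hy : dec u v y ≠ 0) :
    ∃ j, y = (bsel x₁ j, bsel x₂ j) := by
  refine exists_eq_bsel_of_qEx_ne_zero fun hq => ?_
  have hsum := h.sum_outcome_eq_qEx x₁ x₂ y
  rw [hq, mul_zero, ← Fintype.sum_prod_type', Fintype.sum_eq_zero_iff_of_nonneg
    fun uv => h.outcome_nonneg x₁ x₂ uv.1 uv.2 y] at hsum
  exact mul_ne_zero (mul_ne_zero hu hv) hy (congrFun hsum (u, v))

lemma exists_forall_bsel_eq (h : SimulatesExample enc₁ enc₂ dec) (u : U) :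
    ∃ j a, ∀ x, enc₁ x u ≠ 0 → bsel x j = a := by
  obtain ⟨v, hv⟩ := (h.isPMF_enc₂ (false, true)).exists_ne_zero
  obtain ⟨y, hy⟩ := (h.isPMF_dec u v).exists_ne_zero
  obtain ⟨j, hj⟩ := bsel_false_true_bijective.surjective y.2
  refine ⟨j, y.1, fun x hx => ?_⟩
  obtain ⟨i, rfl⟩ := h.exists_eq_bsel hx hv hy
  rw [bsel_false_true_bijective.injective hj]

lemma snd_eq_bsel_of_isAmbiguous (h : SimulatesExample enc₁ enc₂ dec) {j : Fin 2}
    {x₂ y : Bool × Bool} {u : U} {v : V} (hu : IsAmbiguous enc₁ j u) (hv : enc₂ x₂ v ≠ 0)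
    (hy : dec u v y ≠ 0) : y.2 = bsel x₂ j := by
  obtain ⟨a, ha⟩ := hu
  obtain ⟨x₁, hxj, hx⟩ := exists_bsel_eq j a (!y.1)
  obtain ⟨i, hi⟩ := h.exists_eq_bsel (ha x₁ hxj) hv hy
  have hij : i = j := by
    by_contra hne
    simpa [hx i hne] using congrArg Prod.fst hi
  rw [hi, hij]

lemma index_eq_of_isAmbiguous (h : SimulatesExample enc₁ enc₂ dec) {j k : Fin 2} {u : U} {v : V}
    (hu : IsAmbiguous enc₁ j u) (hv : IsAmbiguous enc₂ k v) : j = k := by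
  obtain ⟨b, hb⟩ := hv
  obtain ⟨y, hy⟩ := (h.isPMF_dec u v).exists_ne_zero
  obtain ⟨x₂, hxk, hx⟩ := exists_bsel_eq k b (!y.2)
  by_contra hjk
  simpa [hx j hjk] using h.snd_eq_bsel_of_isAmbiguous hu (hb x₂ hxk) hy

lemma ambiguityProb_eq_zero_or (h : SimulatesExample enc₁ enc₂ dec) {j k : Fin 2} (hjk : j ≠ k) :
    ambiguityProb enc₁ j = 0 ∨ ambiguityProb enc₂ k = 0 := by
  by_cases hj : ∃ u, IsAmbiguous enc₁ j u
  · obtain ⟨u, hu⟩ := hj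
    have hk (v : V) : ¬ IsAmbiguous enc₂ k v := fun hv => hjk (h.index_eq_of_isAmbiguous hu hv)
    simp [ambiguityProb, hk]
  · rw [not_exists] at hj
    simp [ambiguityProb, hj]

open Classical in
lemma sum_isAmbiguous_le_one_half (h : SimulatesExample enc₁ enc₂ dec) (j : Fin 2)
    (x : Bool × Bool) :
    ∑ u with IsAmbiguous enc₁ j u, enc₁ x u ≤ 1 / 2 := by
  set x₂ : Bool × Bool := (false, true)
  calc ∑ u with IsAmbiguous enc₁ j u, enc₁ x u
      = ∑ u with IsAmbiguous enc₁ j u, ∑ v, ∑ y, enc₁ x u * enc₂ x₂ v * dec u v y := by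
        simp only [← mul_sum, (h.isPMF_dec _ _).2, (h.isPMF_enc₂ _).2, mul_one]
    _ = ∑ u with IsAmbiguous enc₁ j u, ∑ v, ∑ y with y.2 = bsel x₂ j,
          enc₁ x u * enc₂ x₂ v * dec u v y := by
        refine sum_congr rfl fun u hu => sum_congr rfl fun v _ => ?_
        refine (sum_filter_of_ne fun y _ hne => ?_).symm
        exact h.snd_eq_bsel_of_isAmbiguous (mem_filter.1 hu).2
          (right_ne_zero_of_mul (left_ne_zero_of_mul hne)) (right_ne_zero_of_mul hne)
    _ ≤ ∑ u, ∑ v, ∑ y with y.2 = bsel x₂ j, enc₁ x u * enc₂ x₂ v * dec u v y :=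
        sum_le_univ_sum_of_nonneg fun u => sum_nonneg fun v _ => sum_nonneg fun y _ =>
          h.outcome_nonneg x x₂ u v y
    _ = ∑ y with y.2 = bsel x₂ j, ∑ u, ∑ v, enc₁ x u * enc₂ x₂ v * dec u v y := by
        simp only [sum_comm (t := ({y | y.2 = bsel x₂ j} : Finset (Bool × Bool)))]
    _ = 16 * (1 / 32 * #{i | bsel x₂ i = bsel x₂ j}) := by
        simp only [h.sum_outcome_eq_qEx, ← mul_sum, sum_qEx_filter]
    _ = 1 / 2 := by
        simp only [x₂, bsel_false_true_bijective.injective.eq_iff, filter_eq', mem_univ, if_true,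
          card_singleton]
        norm_num

lemma ambiguityProb_le_one_half (h : SimulatesExample enc₁ enc₂ dec) (j : Fin 2) :
    ambiguityProb enc₁ j ≤ 1 / 2 := by
  classical
  calc ambiguityProb enc₁ j
      = ∑ x, (1 / 4 : ℝ) * ∑ u with IsAmbiguous enc₁ j u, enc₁ x u := by
        simp only [ambiguityProb, outputProb, mul_sum]
        rw [sum_comm]
    _ ≤ ∑ _x : Bool × Bool, (1 / 4 : ℝ) * (1 / 2) := by
        gcongr with x
        exact h.sum_isAmbiguous_le_one_half j x
    _ = 1 / 2 := by norm_num

section MutualInformation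

variable {Ω : Type*} [Fintype Ω] [DecidableEq U] {p : Ω → ℝ} {X : Ω → Bool × Bool} {W : Ω → U}

lemma condEnt_le_sum_ambiguityProb (h : SimulatesExample enc₁ enc₂ dec) (hp : ∀ ω, 0 ≤ p ω)
    (hXW : ∀ x u, marg p (fun ω => (X ω, W ω)) (x, u) = 1 / 4 * enc₁ x u) :
    condEnt p X W ≤ ∑ j, ambiguityProb enc₁ j := by
  classical
  refine (condEnt_le_sum_marg_mul_logb_card hp X W).trans ?_
  simp only [ambiguityProb, sum_filter]
  rw [sum_comm]
  refine sum_le_sum fun u _ => ?_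
  obtain ⟨j, a, hja⟩ := h.exists_forall_bsel_eq u
  have hW : marg p W u = outputProb enc₁ u := by
    simp only [← sum_marg_prodMk p X W, hXW, outputProb]
  have hnonneg : 0 ≤ outputProb enc₁ u := hW ▸ marg_nonneg hp W u
  calc marg p W u * Real.logb 2 #{x | marg p (fun ω => (X ω, W ω)) (x, u) ≠ 0}
      = outputProb enc₁ u * Real.logb 2 #{x | enc₁ x u ≠ 0} := by simp [hW, hXW]
    _ ≤ outputProb enc₁ u * if IsAmbiguous enc₁ j u then 1 else 0 := by
        gcongr
        exact logb_card_support_le hja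
    _ = if IsAmbiguous enc₁ j u then outputProb enc₁ u else 0 := mul_boole _ _
    _ ≤ ∑ i, if IsAmbiguous enc₁ i u then outputProb enc₁ u else 0 :=
        single_le_sum (f := fun i => if IsAmbiguous enc₁ i u then outputProb enc₁ u else 0)
          (fun _ _ => ite_nonneg hnonneg le_rfl) (mem_univ j)

lemma two_sub_sum_ambiguityProb_le_mi (h : SimulatesExample enc₁ enc₂ dec) (hp : ∀ ω, 0 ≤ p ω)
    (hXW : ∀ x u, marg p (fun ω => (X ω, W ω)) (x, u) = 1 / 4 * enc₁ x u) :
    2 - ∑ j, ambiguityProb enc₁ j ≤ mi p W X := by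
  have hX (x : Bool × Bool) : marg p X x = (Fintype.card (Bool × Bool) : ℝ)⁻¹ := by
    simp only [← sum_marg_prodMk p W X, marg_prodMk_comm p W X, hXW, ← mul_sum,
      (h.isPMF_enc₁ x).2]
    norm_num
  have hent : ent p X = 2 := by
    rw [ent_eq_logb_card hX, Real.logb_eq_iff_rpow_eq] <;> norm_num
  rw [mi_eq_ent_sub_condEnt, hent]
  exact sub_le_sub_left (h.condEnt_le_sum_ambiguityProb hp hXW) 2

end MutualInformation

end SimulatesExample

/-- **Converse core of Proposition 1.**  For any joint pmf
`p(x₁,x₂,u₁,u₂,y) = p(x₁) p(x₂) p(u₁|x₁) p(u₂|x₂) p(y|u₁,u₂)` with `(X₁,X₂)`-marginal four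
i.i.d. uniform bits and `(X₁,X₂,Y)`-marginal equal to the Example distribution `qEx`, we
have `I(U₁;X₁) ≥ 1`, `I(U₂;X₂) ≥ 1`, and `I(U₁;X₁) + I(U₂;X₂) ≥ 3`. -/
theorem example_converse_core
    {U1 U2 : Type} [Fintype U1] [Fintype U2] [DecidableEq U1] [DecidableEq U2]
    (pU1c : Bool × Bool → U1 → ℝ) (pU2c : Bool × Bool → U2 → ℝ)
    (pYc : U1 → U2 → Bool × Bool → ℝ)
    (hpU1 : ∀ x1, IsPMF (pU1c x1)) (hpU2 : ∀ x2, IsPMF (pU2c x2))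
    (hpY : ∀ u1 u2, IsPMF (pYc u1 u2))
    (p : (Bool × Bool) × (Bool × Bool) × U1 × U2 × (Bool × Bool) → ℝ)
    (hpdef : ∀ x1 x2 u1 u2 y,
      p (x1, x2, u1, u2, y) = (1 / 16 : ℝ) * pU1c x1 u1 * pU2c x2 u2 * pYc u1 u2 y)
    (hmarg : ∀ x1 x2 y,
      (∑ u1 : U1, ∑ u2 : U2, (1 / 16 : ℝ) * pU1c x1 u1 * pU2c x2 u2 * pYc u1 u2 y)
        = qEx (x1, x2, y)) :
    1 ≤ mi p (fun ω => ω.2.2.1) (fun ω => ω.1) ∧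
    1 ≤ mi p (fun ω => ω.2.2.2.1) (fun ω => ω.2.1) ∧
    3 ≤ mi p (fun ω => ω.2.2.1) (fun ω => ω.1)
        + mi p (fun ω => ω.2.2.2.1) (fun ω => ω.2.1) := by
  have h : SimulatesExample pU1c pU2c pYc := ⟨hpU1, hpU2, hpY, hmarg⟩
  have hp : ∀ ω, 0 ≤ p ω := fun ⟨x1, x2, u1, u2, y⟩ => by
    have := h.outcome_nonneg x1 x2 u1 u2 y
    rw [hpdef]
    linarith
  have hunif : IsPMF fun _ : Bool × Bool => (1 / 4 : ℝ) := by constructor <;> norm_num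
  have hfac : ∀ x1 x2 u1 u2 y, p (x1, x2, u1, u2, y) =
      1 / 4 * (1 / 4) * pU1c x1 u1 * pU2c x2 u2 * pYc u1 u2 y := fun x1 x2 u1 u2 y => by
    rw [hpdef]
    norm_num
  have mi₁ := h.two_sub_sum_ambiguityProb_le_mi hp (marg_user₁ hunif hpU2 hpY hfac)
  have mi₂ := h.symm.two_sub_sum_ambiguityProb_le_mi hp (marg_user₂ hunif hpU1 hpY hfac)
  rw [Fin.sum_univ_two] at mi₁ mi₂
  have half₁ := h.ambiguityProb_le_one_half
  have half₂ := h.symm.ambiguityProb_le_one_half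
  refine ⟨by linarith [half₁ 0, half₁ 1], by linarith [half₂ 0, half₂ 1], ?_⟩
  rcases h.ambiguityProb_eq_zero_or (j := 0) (k := 1) (by decide) with h01 | h01 <;>
    rcases h.ambiguityProb_eq_zero_or (j := 1) (k := 0) (by decide) with h10 | h10 <;>
    linarith [half₁ 0, half₁ 1, half₂ 0, half₂ 1]
end

section
/- Achievability of the corner point (2,1) in Proposition 1. There exist finite sets 𝒰₁,𝒰₂ and a joint pmf p(x₁,x₂,u₁,u₂,y) = p(x₁) p(x₂) p(u₁|x₁) p(u₂|x₂) p(y|u₁,u₂), whose (X₁,X₂)-marginal is that of four i.i.d. uniform bits and whose (X₁,X₂,Y)-marginal equals the Example distribution q_{X₁X₂Y}, such that I(U₁;X₁) = 2 and I(U₂;X₂) = 1. Concretely, U₁ = X₁ and U₂ = (J, X₂J) (with J uniform on {1,2} independent of (X₁,X₂)) yield such a pmf, and for this choice I(U₁;X₁) = H(X₁) = 2 and I(U₂;X₂) = I(J,X₂J;X₂) = 1. -/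
/-!
Take `U₁ = X₁`, `U₂ = (J, X₂J)` and `Y = (X₁J, X₂J)`, where `J` is read off `U₂`. Given `Xᵢ`, each
`Uᵢ` is uniform on a set of `k` values, and each of its values is compatible with the same number of
values of `Xᵢ`; as `Xᵢ` is uniform, double counting makes `Uᵢ` uniform on its alphabet. Therefore
`I(Uᵢ;Xᵢ) = H(Uᵢ) - H(Uᵢ|Xᵢ) = log |𝒰ᵢ| - log k`. Both alphabets have four elements, and
`k = 1` for `U₁` while `k = 2` for `U₂`.
-/

open Finset

section Marginal

variable {Ω β γ : Type*} [Fintype Ω] [Fintype β] [DecidableEq β]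

lemma marg_marg [DecidableEq γ] (p : Ω → ℝ) (f : Ω → β) (g : β → γ) :
    marg (marg p f) g = marg p (g ∘ f) := by
  ext c
  calc marg (marg p f) g c
      = ∑ b, ∑ ω, if f ω = b then (if g b = c then p ω else 0) else 0 := by
        unfold marg
        refine sum_congr rfl fun b _ => ?_
        split_ifs <;> simp
    _ = marg p (g ∘ f) c := by
        rw [sum_comm]
        simp [marg]

variable [Fintype γ] [DecidableEq γ]

lemma ent_marg (p : Ω → ℝ) (f : Ω → β) (g : β → γ) : ent (marg p f) g = ent p (g ∘ f) :=
  congrArg entPMF (marg_marg p f g)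

lemma mi_eq_mi_marg (p : Ω → ℝ) (f : Ω → β) (g : Ω → γ) :
    mi p f g = mi (marg p fun ω => (f ω, g ω)) Prod.fst Prod.snd := by
  simp only [mi, ent_marg]
  rfl

end Marginal

lemma entPMF_eq_sum_negMulLog {β : Type*} [Fintype β] (r : β → ℝ) :
    entPMF r = (∑ b, Real.negMulLog (r b)) / Real.log 2 := by
  simp only [entPMF, Real.negMulLog, Real.logb, sum_div, ← sum_neg_distrib]
  exact sum_congr rfl fun b _ => by ring

section Channel

variable {α β : Type*}

/-- The joint pmf of the output and the input of a channel `W` with input distribution `P`. The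
output comes first, in the order of the arguments of `I(U;X)`. -/
def channelPMF (P : α → ℝ) (W : α → β → ℝ) : β × α → ℝ :=
  fun a => P a.2 * W a.2 a.1

/-- The output distribution of a channel `W` with input distribution `P`. -/
def outputPMF [Fintype α] (P : α → ℝ) (W : α → β → ℝ) : β → ℝ :=
  fun u => ∑ x, P x * W x u

variable [Fintype α] [Fintype β] {P : α → ℝ} {W : α → β → ℝ}

lemma marg_fst_channelPMF [DecidableEq β] : marg (channelPMF P W) Prod.fst = outputPMF P W := by
  ext u
  simp only [marg, channelPMF, outputPMF, Fintype.sum_prod_type_right, sum_ite_eq', mem_univ,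
    if_true]

lemma marg_snd_channelPMF [DecidableEq α] (hW : ∀ x, ∑ u, W x u = 1) :
    marg (channelPMF P W) Prod.snd = P := by
  ext x
  simp only [marg, channelPMF, Fintype.sum_prod_type, sum_ite_eq', mem_univ, if_true, ← mul_sum,
    hW, mul_one]

lemma entPMF_channelPMF (hW : ∀ x, ∑ u, W x u = 1) :
    entPMF (channelPMF P W) = entPMF P + ∑ x, P x * entPMF (W x) := by
  simp only [entPMF_eq_sum_negMulLog, channelPMF, Fintype.sum_prod_type_right,
    Real.negMulLog_mul, sum_add_distrib, ← sum_mul, hW, one_mul, ← mul_sum, add_div, sum_div,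
    mul_div_assoc]

lemma mi_channelPMF [DecidableEq α] [DecidableEq β] (hW : ∀ x, ∑ u, W x u = 1) :
    mi (channelPMF P W) Prod.fst Prod.snd
      = entPMF (outputPMF P W) - ∑ x, P x * entPMF (W x) := by
  have hpair : marg (channelPMF P W) (fun ω => (ω.1, ω.2)) = channelPMF P W := by
    ext a
    simp [marg]
  simp only [mi, ent, marg_fst_channelPMF, marg_snd_channelPMF hW, hpair, entPMF_channelPMF hW]
  ring

end Channel

section Uniform

variable {α β : Type*} [DecidableEq β]

/-- The uniform distribution on a finite set `S`; it is the zero function when `S` is empty. -/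
noncomputable def uniformPMF (S : Finset β) : β → ℝ :=
  fun b => if b ∈ S then (#S : ℝ)⁻¹ else 0

variable [Fintype β]

lemma sum_uniformPMF_mul (S : Finset β) (g : β → ℝ) :
    ∑ b, uniformPMF S b * g b = (#S : ℝ)⁻¹ * ∑ b ∈ S, g b := by
  simp only [uniformPMF, ite_mul, zero_mul, sum_ite_mem, univ_inter, mul_sum]

lemma sum_uniformPMF {S : Finset β} (hS : S.Nonempty) : ∑ b, uniformPMF S b = 1 := by
  simpa [hS.card_pos.ne'] using sum_uniformPMF_mul S 1

lemma isPMF_uniformPMF {S : Finset β} (hS : S.Nonempty) : IsPMF (uniformPMF S) :=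
  ⟨fun b => by unfold uniformPMF; positivity, sum_uniformPMF hS⟩

lemma entPMF_uniformPMF (S : Finset β) : entPMF (uniformPMF S) = Real.logb 2 #S := by
  rcases S.eq_empty_or_nonempty with rfl | hS
  · simp [entPMF, uniformPMF]
  · have hlog : ∀ b ∈ S, Real.logb 2 (uniformPMF S b) = -Real.logb 2 #S := fun b hb => by
      rw [uniformPMF, if_pos hb, Real.logb_inv]
    have hcard : (#S : ℝ) ≠ 0 := Nat.cast_ne_zero.mpr hS.card_pos.ne'
    rw [entPMF, sum_uniformPMF_mul, sum_congr rfl hlog, sum_const, nsmul_eq_mul,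
      inv_mul_cancel_left₀ hcard, neg_neg]

variable [Fintype α] [DecidableEq α] [Nonempty α] {S : α → Finset β} {k r : ℕ}

lemma outputPMF_uniform_of_biregular (hk : k ≠ 0) (hS : ∀ x, #(S x) = k)
    (hr : ∀ u, #{x | u ∈ S x} = r) :
    outputPMF (uniformPMF univ) (fun x => uniformPMF (S x)) = uniformPMF univ := by
  have hcount : Fintype.card α * k = Fintype.card β * r :=
    card_mul_eq_card_mul (fun x u => u ∈ S x)
      (fun x _ => by rw [bipartiteAbove, filter_univ_mem, hS]) fun u _ => hr u
  have hcount' : (Fintype.card α : ℝ) * k = Fintype.card β * r := mod_cast hcount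
  have hα : (Fintype.card α : ℝ) ≠ 0 := by simp
  have hk' : (k : ℝ) ≠ 0 := mod_cast hk
  have hβ : (Fintype.card β : ℝ) ≠ 0 := left_ne_zero_of_mul (hcount' ▸ mul_ne_zero hα hk')
  ext u
  calc outputPMF (uniformPMF univ) (fun x => uniformPMF (S x)) u
      = (Fintype.card α : ℝ)⁻¹ * (r * (k : ℝ)⁻¹) := by
        simp only [outputPMF, sum_uniformPMF_mul, card_univ]
        simp only [uniformPMF, hS, ← sum_filter, sum_const, hr, nsmul_eq_mul]
    _ = uniformPMF univ u := by
        simp only [uniformPMF, mem_univ, if_true, card_univ]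
        field_simp
        linarith

lemma mi_uniform_of_biregular (hk : k ≠ 0) (hS : ∀ x, #(S x) = k)
    (hr : ∀ u, #{x | u ∈ S x} = r) :
    mi (channelPMF (uniformPMF univ) fun x => uniformPMF (S x)) Prod.fst Prod.snd
      = Real.logb 2 (Fintype.card β) - Real.logb 2 k := by
  have hne : ∀ x, (S x).Nonempty := fun x => card_ne_zero.mp ((hS x).trans_ne hk)
  simp only [mi_channelPMF fun x => sum_uniformPMF (hne x), outputPMF_uniform_of_biregular hk hS hr,
    entPMF_uniformPMF, hS, ← sum_mul, sum_uniformPMF univ_nonempty, one_mul, card_univ]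

end Uniform

section TwoSource

variable {α₁ α₂ β₁ β₂ γ : Type*}

/-- The joint pmf `p(x₁) p(x₂) p(u₁|x₁) p(u₂|x₂) p(y|u₁,u₂)` of two independent sources, their
separate descriptions, and an output generated from the descriptions. -/
def twoSourcePMF (P₁ : α₁ → ℝ) (P₂ : α₂ → ℝ) (W₁ : α₁ → β₁ → ℝ) (W₂ : α₂ → β₂ → ℝ)
    (V : β₁ → β₂ → γ → ℝ) : α₁ × α₂ × β₁ × β₂ × γ → ℝ :=
  fun (x₁, x₂, u₁, u₂, y) => P₁ x₁ * P₂ x₂ * W₁ x₁ u₁ * W₂ x₂ u₂ * V u₁ u₂ y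

variable [Fintype α₁] [Fintype α₂] [Fintype β₁] [Fintype β₂] [Fintype γ]
  {P₁ : α₁ → ℝ} {P₂ : α₂ → ℝ} {W₁ : α₁ → β₁ → ℝ} {W₂ : α₂ → β₂ → ℝ} {V : β₁ → β₂ → γ → ℝ}

lemma marg_twoSourcePMF_left [DecidableEq α₁] [DecidableEq β₁] (hP₂ : ∑ x, P₂ x = 1)
    (hW₂ : ∀ x, ∑ u, W₂ x u = 1) (hV : ∀ u₁ u₂, ∑ y, V u₁ u₂ y = 1) :
    marg (twoSourcePMF P₁ P₂ W₁ W₂ V) (fun ω => (ω.2.2.1, ω.1)) = channelPMF P₁ W₁ := by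
  ext ⟨u₁, x₁⟩
  calc marg (twoSourcePMF P₁ P₂ W₁ W₂ V) (fun ω => (ω.2.2.1, ω.1)) (u₁, x₁)
      = ∑ x₂, ∑ u₂, ∑ y, P₁ x₁ * P₂ x₂ * W₁ x₁ u₁ * W₂ x₂ u₂ * V u₁ u₂ y := by
        simp [marg, twoSourcePMF, Fintype.sum_prod_type, ite_and]
    _ = channelPMF P₁ W₁ (u₁, x₁) := by
        simp only [← mul_sum, ← sum_mul, hV, mul_one, hW₂, hP₂, channelPMF]

lemma marg_twoSourcePMF_right [DecidableEq α₂] [DecidableEq β₂] (hP₁ : ∑ x, P₁ x = 1)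
    (hW₁ : ∀ x, ∑ u, W₁ x u = 1) (hV : ∀ u₁ u₂, ∑ y, V u₁ u₂ y = 1) :
    marg (twoSourcePMF P₁ P₂ W₁ W₂ V) (fun ω => (ω.2.2.2.1, ω.2.1)) = channelPMF P₂ W₂ := by
  ext ⟨u₂, x₂⟩
  calc marg (twoSourcePMF P₁ P₂ W₁ W₂ V) (fun ω => (ω.2.2.2.1, ω.2.1)) (u₂, x₂)
      = ∑ x₁, ∑ u₁, ∑ y, P₁ x₁ * P₂ x₂ * W₁ x₁ u₁ * W₂ x₂ u₂ * V u₁ u₂ y := by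
        simp [marg, twoSourcePMF, Fintype.sum_prod_type, ite_and]
    _ = channelPMF P₂ W₂ (u₂, x₂) := by
        simp only [← mul_sum, ← sum_mul, hV, mul_one, hW₁, hP₁, channelPMF, one_mul]

end TwoSource

/-- The possible values of `U₂ = (J, X₂J)` given `X₂ = x`. -/
def indexedBits (x : Bool × Bool) : Finset (Fin 2 × Bool) :=
  univ.image fun j => (j, bsel x j)

lemma indexedBits_nonempty (x : Bool × Bool) : (indexedBits x).Nonempty :=
  univ_nonempty.image _

lemma card_indexedBits (x : Bool × Bool) : #(indexedBits x) = 2 :=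
  card_image_of_injective _ fun _ _ h => congrArg Prod.fst h

lemma card_filter_mem_indexedBits : ∀ u, #{x | u ∈ indexedBits x} = 2 := by
  decide

/-- The decoder: `(X₁J, X₂J)` as a function of `U₁ = X₁` and `U₂ = (J, X₂J)`. -/
def selectBits (u₁ : Bool × Bool) (u₂ : Fin 2 × Bool) : Bool × Bool :=
  (bsel u₁ u₂.1, u₂.2)

/-- The joint pmf of `(X₁, X₂, U₁, U₂, Y)` for `U₁ = X₁`, `U₂ = (J, X₂J)` and `Y = (X₁J, X₂J)`. -/
noncomputable def cornerPMF :
    (Bool × Bool) × (Bool × Bool) × (Bool × Bool) × (Fin 2 × Bool) × (Bool × Bool) → ℝ :=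
  twoSourcePMF (uniformPMF univ) (uniformPMF univ) (fun x₁ => uniformPMF {x₁})
    (fun x₂ => uniformPMF (indexedBits x₂)) fun u₁ u₂ => uniformPMF {selectBits u₁ u₂}

lemma cornerPMF_apply (x₁ x₂ u₁ : Bool × Bool) (u₂ : Fin 2 × Bool) (y : Bool × Bool) :
    cornerPMF (x₁, x₂, u₁, u₂, y)
      = 1 / 16 * uniformPMF {x₁} u₁ * uniformPMF (indexedBits x₂) u₂
        * uniformPMF {selectBits u₁ u₂} y := by
  have huniv (x : Bool × Bool) : uniformPMF univ x = 1 / 4 := by norm_num [uniformPMF]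
  simp only [cornerPMF, twoSourcePMF, huniv]
  ring

lemma sum_uniformPMF_indexedBits_mul (x : Bool × Bool) (g : Fin 2 × Bool → ℝ) :
    ∑ u, uniformPMF (indexedBits x) u * g u = 1 / 2 * ∑ j, g (j, bsel x j) := by
  rw [sum_uniformPMF_mul, card_indexedBits, indexedBits,
    sum_image fun _ _ _ _ h => congrArg Prod.fst h, Nat.cast_ofNat, one_div]

lemma sum_sum_corner_eq_qEx (x₁ x₂ y : Bool × Bool) :
    ∑ u₁, ∑ u₂, (1 / 16 : ℝ) * uniformPMF {x₁} u₁ * uniformPMF (indexedBits x₂) u₂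
        * uniformPMF {selectBits u₁ u₂} y = qEx (x₁, x₂, y) :=
  calc _ = 1 / 16 * ∑ u₁, uniformPMF {x₁} u₁ *
          ∑ u₂, uniformPMF (indexedBits x₂) u₂ * uniformPMF {selectBits u₁ u₂} y := by
        simp only [mul_sum, mul_assoc]
    _ = 1 / 16 * (1 / 2 * ∑ j, uniformPMF {(bsel x₁ j, bsel x₂ j)} y) := by
        simp only [sum_uniformPMF_mul {x₁}, sum_singleton, card_singleton, Nat.cast_one, inv_one,
          one_mul, sum_uniformPMF_indexedBits_mul, selectBits]
    _ = qEx (x₁, x₂, y) := by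
        simp only [qEx, uniformPMF, mem_singleton, card_singleton, Nat.cast_one, inv_one, ← mul_sum]
        ring

lemma logb_two_four : Real.logb 2 4 = 2 := by
  rw [show (4 : ℝ) = 2 ^ (2 : ℝ) by norm_num, Real.logb_rpow two_pos (by norm_num)]

lemma mi_cornerPMF_left : mi cornerPMF (fun ω => ω.2.2.1) (fun ω => ω.1) = 2 := by
  rw [mi_eq_mi_marg, cornerPMF,
    marg_twoSourcePMF_left (sum_uniformPMF univ_nonempty)
      (fun x₂ => sum_uniformPMF (indexedBits_nonempty x₂))
      fun u₁ u₂ => sum_uniformPMF (singleton_nonempty (selectBits u₁ u₂)),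
    mi_uniform_of_biregular one_ne_zero card_singleton (r := 1) (by decide)]
  norm_num [logb_two_four]

lemma mi_cornerPMF_right : mi cornerPMF (fun ω => ω.2.2.2.1) (fun ω => ω.2.1) = 1 := by
  rw [mi_eq_mi_marg, cornerPMF,
    marg_twoSourcePMF_right (sum_uniformPMF univ_nonempty)
      (fun x₁ => sum_uniformPMF (singleton_nonempty x₁))
      fun u₁ u₂ => sum_uniformPMF (singleton_nonempty (selectBits u₁ u₂)),
    mi_uniform_of_biregular two_ne_zero card_indexedBits card_filter_mem_indexedBits]
  norm_num [logb_two_four]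

/-- **Achievability of the corner point `(2,1)` in Proposition 1.**  There exist finite sets
`U₁, U₂` and a joint pmf `p(x₁,x₂,u₁,u₂,y) = p(x₁) p(x₂) p(u₁|x₁) p(u₂|x₂) p(y|u₁,u₂)`
with `(X₁,X₂)`-marginal four i.i.d. uniform bits and `(X₁,X₂,Y)`-marginal equal to the
Example distribution `qEx`, such that `I(U₁;X₁) = 2` and `I(U₂;X₂) = 1`. -/
theorem example_corner_point_achievable :
    ∃ (U1 U2 : Type) (_ : Fintype U1) (_ : Fintype U2)
      (_ : DecidableEq U1) (_ : DecidableEq U2)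
      (pU1c : Bool × Bool → U1 → ℝ) (pU2c : Bool × Bool → U2 → ℝ)
      (pYc : U1 → U2 → Bool × Bool → ℝ)
      (p : (Bool × Bool) × (Bool × Bool) × U1 × U2 × (Bool × Bool) → ℝ),
      (∀ x1, IsPMF (pU1c x1)) ∧
      (∀ x2, IsPMF (pU2c x2)) ∧
      (∀ u1 u2, IsPMF (pYc u1 u2)) ∧
      (∀ x1 x2 u1 u2 y,
        p (x1, x2, u1, u2, y) = (1 / 16 : ℝ) * pU1c x1 u1 * pU2c x2 u2 * pYc u1 u2 y) ∧
      (∀ x1 x2 y,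
        (∑ u1 : U1, ∑ u2 : U2, (1 / 16 : ℝ) * pU1c x1 u1 * pU2c x2 u2 * pYc u1 u2 y)
          = qEx (x1, x2, y)) ∧
      mi p (fun ω => ω.2.2.1) (fun ω => ω.1) = 2 ∧
      mi p (fun ω => ω.2.2.2.1) (fun ω => ω.2.1) = 1 := by
  exact ⟨Bool × Bool, Fin 2 × Bool, inferInstance, inferInstance, inferInstance, inferInstance,
    fun x₁ => uniformPMF {x₁}, fun x₂ => uniformPMF (indexedBits x₂),
    fun u₁ u₂ => uniformPMF {selectBits u₁ u₂}, cornerPMF,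
    fun x₁ => isPMF_uniformPMF (singleton_nonempty x₁),
    fun x₂ => isPMF_uniformPMF (indexedBits_nonempty x₂),
    fun u₁ u₂ => isPMF_uniformPMF (singleton_nonempty (selectBits u₁ u₂)),
    cornerPMF_apply, sum_sum_corner_eq_qEx, mi_cornerPMF_left, mi_cornerPMF_right⟩
end

section
/- Claim 2. Let 𝒰 be a finite set and let p be a joint pmf of the form p(x₁,x₂,u,y) = p(x₁) p(x₂) p(u|x₁) p(y|u,x₂), whose (X₁,X₂)-marginal is that of four i.i.d. uniform bits and whose (X₁,X₂,Y)-marginal equals the Example distribution q_{X₁X₂Y}. If H(X₁|U) > 0, then for every u with P(U=u) > 0 and H(X₁|U=u) > 0, there exists k ∈ {1,2} such that H(X₁ₖ|U=u) = 0. -/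
/-!
Fix `u` with `P(U = u) > 0` and feed in an `x₂` whose bits are distinct, so that the second
component of `Y` reveals the index `J`. The law of `Y` given `(u, x₂)` charges some `y`. By the
factorization of `p`, every `x₁` compatible with `u` occurs together with this `x₂` and this `y`, so
`y = (x₁ⱼ, x₂ⱼ)` for some `j`. The index `j` is determined by the second component of `y`,
hence is the same for all such `x₁`, and the bit `x₁ⱼ` is then the first component of `y`: it is
constant given `U = u`.
-/

open Finset

/-- The conditional pmf of `f` given the event `g = c`, under the joint pmf `p`. -/
noncomputable def condPMF {Ω β γ : Type*} [Fintype Ω] [DecidableEq β] [DecidableEq γ]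
    (p : Ω → ℝ) (f : Ω → β) (g : Ω → γ) (c : γ) : β → ℝ :=
  fun b => marg p (fun ω => (f ω, g ω)) (b, c) / marg p g c

section Marginals

variable {Ω β γ : Type*} [Fintype Ω] [DecidableEq β] [DecidableEq γ] {p : Ω → ℝ}

lemma IsPMF.exists_ne_zero_s10 (hp : IsPMF p) : ∃ ω, p ω ≠ 0 := by
  have hsum : ∑ ω, p ω ≠ 0 := hp.2 ▸ one_ne_zero
  simpa using exists_ne_zero_of_sum_ne_zero hsum

lemma isPMF_uniform [Nonempty Ω] : IsPMF fun _ : Ω => (Fintype.card Ω : ℝ)⁻¹ :=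
  ⟨fun _ => by positivity, by simp⟩

lemma exists_ne_zero_of_marg_ne_zero {g : Ω → γ} {c : γ} (hc : marg p g c ≠ 0) :
    ∃ ω, g ω = c ∧ p ω ≠ 0 := by
  obtain ⟨ω, -, hω⟩ := exists_ne_zero_of_sum_ne_zero hc
  exact ⟨ω, by simpa using hω⟩

lemma marg_prodMk_eq_single {f : Ω → β} {g : Ω → γ} {c : γ} {b : β}
    (hf : ∀ ω, g ω = c → p ω ≠ 0 → f ω = b) (b' : β) :
    marg p (fun ω => (f ω, g ω)) (b', c) = (Pi.single b (marg p g c) : β → ℝ) b' := by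
  simp only [marg, Pi.single_apply, Prod.mk.injEq]
  split_ifs with hb
  · refine sum_congr rfl fun ω _ => ?_
    grind
  · refine sum_eq_zero fun ω _ => ?_
    grind

lemma condPMF_eq_single {f : Ω → β} {g : Ω → γ} {c : γ} {b : β} (hc : marg p g c ≠ 0)
    (hf : ∀ ω, g ω = c → p ω ≠ 0 → f ω = b) :
    condPMF p f g c = Pi.single b 1 := by
  ext b'
  rw [condPMF, marg_prodMk_eq_single hf, Pi.single_apply, Pi.single_apply, ite_div, zero_div,
    div_self hc]

lemma entPMF_single [Fintype β] (b : β) : entPMF (Pi.single b 1) = 0 := by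
  simp [entPMF, Pi.single_apply]

end Marginals

lemma exists_forall_apply_eq_fst {X ι α β : Type*} {S : Set X} (hS : S.Nonempty)
    {f : X → ι → α} {z : ι → β} (hz : Function.Injective z) {y : α × β}
    (hy : ∀ x ∈ S, ∃ j, y = (f x j, z j)) :
    ∃ k, ∀ x ∈ S, f x k = y.1 := by
  obtain ⟨x₀, hx₀⟩ := hS
  obtain ⟨k, rfl⟩ := hy x₀ hx₀
  refine ⟨k, fun x hx => ?_⟩
  obtain ⟨j, hj⟩ := hy x hx
  obtain ⟨hfst, hsnd⟩ := Prod.mk.inj hj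
  rw [hfst, hz hsnd]

lemma injective_bsel_false_true : Function.Injective (bsel (false, true)) := by
  decide

/-- The two-bit strings of the Example become arbitrary variables with components `f₁ x₁ j` and
`f₂ x₂ j`, and `hsupp` says that `Y = (X₁J, X₂J)` for some random index `J` of unspecified law. -/
theorem example_claim2_general
    {ι α β X₁ X₂ U : Type*} [Fintype α] [DecidableEq α] [Fintype β]
    [Fintype X₁] [Fintype X₂] [Fintype U] [DecidableEq U]
    {p₁ : X₁ → ℝ} {p₂ : X₂ → ℝ} {pU : X₁ → U → ℝ} {pY : U → X₂ → α × β → ℝ}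
    (hp₁ : IsPMF p₁) (hp₂ : IsPMF p₂) (hpU : ∀ x₁, IsPMF (pU x₁)) (hpY : ∀ u x₂, IsPMF (pY u x₂))
    {p : X₁ × X₂ × U × (α × β) → ℝ}
    (hp : ∀ x₁ x₂ u y, p (x₁, x₂, u, y) = p₁ x₁ * p₂ x₂ * pU x₁ u * pY u x₂ y)
    {f₁ : X₁ → ι → α} {f₂ : X₂ → ι → β}
    (hsupp : ∀ x₁ x₂ y, ∑ u, p (x₁, x₂, u, y) ≠ 0 → ∃ j, y = (f₁ x₁ j, f₂ x₂ j))
    {z : X₂} (hz : p₂ z ≠ 0) (hinj : Function.Injective (f₂ z))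
    {u : U} (hu : 0 < marg p (fun ω => ω.2.2.1) u) :
    ∃ k, entPMF (condPMF p (fun ω => f₁ ω.1 k) (fun ω => ω.2.2.1) u) = 0 := by
  have hnonneg : ∀ x₁ x₂ v y, 0 ≤ p (x₁, x₂, v, y) := fun x₁ x₂ v y => by
    rw [hp]
    exact mul_nonneg (mul_nonneg (mul_nonneg (hp₁.1 x₁) (hp₂.1 x₂)) ((hpU x₁).1 v))
      ((hpY v x₂).1 y)
  let S : Set X₁ := {x₁ | p₁ x₁ * pU x₁ u ≠ 0}
  have hS : ∀ x₁ x₂ y, p (x₁, x₂, u, y) ≠ 0 → x₁ ∈ S := fun x₁ x₂ y h => by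
    simp_all [S]
  have hS_nonempty : S.Nonempty := by
    obtain ⟨⟨x₁, x₂, _, y⟩, rfl, h⟩ := exists_ne_zero_of_marg_ne_zero hu.ne'
    exact ⟨x₁, hS x₁ x₂ y h⟩
  obtain ⟨y, hy⟩ := (hpY u z).exists_ne_zero_s10
  have hyS : ∀ x₁ ∈ S, ∃ j, y = (f₁ x₁ j, f₂ z j) := fun x₁ hx₁ => by
    have hne : p (x₁, z, u, y) ≠ 0 := by
      simp_all [S]
    have hpos := (hnonneg x₁ z u y).lt_of_ne' hne
    exact hsupp x₁ z y (sum_pos' (fun v _ => hnonneg x₁ z v y) ⟨u, mem_univ u, hpos⟩).ne'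
  obtain ⟨k, hk⟩ := exists_forall_apply_eq_fst hS_nonempty hinj hyS
  refine ⟨k, ?_⟩
  rw [condPMF_eq_single (b := y.1) hu.ne', entPMF_single]
  rintro ⟨x₁, x₂, _, y'⟩ rfl h
  exact hk x₁ (hS x₁ x₂ y' h)

/-- **Claim 2.**  For any joint pmf `p(x₁,x₂,u,y) = p(x₁) p(x₂) p(u|x₁) p(y|u,x₂)` with
`(X₁,X₂)`-marginal four i.i.d. uniform bits and `(X₁,X₂,Y)`-marginal equal to the Example
distribution `qEx`, if `H(X₁|U) > 0`, then for every `u` with `P(U=u) > 0` and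
`H(X₁|U=u) > 0` there is `k ∈ {1,2}` with `H(X₁ₖ|U=u) = 0`. -/
theorem example_claim2
    {U : Type} [Fintype U] [DecidableEq U]
    (pUc : Bool × Bool → U → ℝ) (pYc : U → Bool × Bool → Bool × Bool → ℝ)
    (hpU : ∀ x1, IsPMF (pUc x1)) (hpY : ∀ u x2, IsPMF (pYc u x2))
    (p : (Bool × Bool) × (Bool × Bool) × U × (Bool × Bool) → ℝ)
    (hpdef : ∀ x1 x2 u y,
      p (x1, x2, u, y) = (1 / 16 : ℝ) * pUc x1 u * pYc u x2 y)
    (hmarg : ∀ x1 x2 y,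
      (∑ u : U, (1 / 16 : ℝ) * pUc x1 u * pYc u x2 y) = qEx (x1, x2, y))
    (hH : 0 < condEnt p (fun ω => ω.1) (fun ω => ω.2.2.1)) :
    ∀ u : U, 0 < marg p (fun ω => ω.2.2.1) u →
      0 < entPMF (condPMF p (fun ω => ω.1) (fun ω => ω.2.2.1) u) →
      ∃ k : Fin 2,
        entPMF (condPMF p (fun ω => bsel ω.1 k) (fun ω => ω.2.2.1) u) = 0 := by
  intro u hu _
  exact example_claim2_general (f₁ := bsel) (f₂ := bsel) (z := (false, true))
    isPMF_uniform isPMF_uniform hpU hpY (by norm_num [hpdef])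
    (fun _ _ _ h => exists_eq_bsel_of_qEx_ne_zero (by simpa only [hpdef, hmarg] using h))
    (by simp) injective_bsel_false_true hu
end
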